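/- Validity of the LP-based heuristic bound for the robust set covering problem: let Y ∈ Λ be a covering and let λ : I → ℝ satisfy λ i ≥ 0 for all i ∈ I and Σ_{i∈I, O i j = 1} λ i ≤ l j + (u j − l j) * (1 if j ∈ Y else 0) for every j ∈ J. Then the optimal robustness cost min_{K∈Λ} R_K is at most Σ_{j∈Y} u j − Σ_{i∈I} λ i. -/

import Mathlib

open Finset

/-!
The regret of `K` is largest in the scenario that puts `u` on `K` and `l` elsewhere: against a
competitor `K'`, raising costs on `K \ K'` and lowering them on `K' \ K` only increases the
difference of the two costs. Hence `R_Y` is `∑_{j ∈ Y} u j` minus the optimum of a nominal set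
covering problem, and by weak duality that optimum is at least the value `∑ i, λ i` of any feasible
dual solution.
-/

section WeakDuality

variable {I J R : Type*} [AddCommMonoid R] [PartialOrder R] [IsOrderedAddMonoid R]

/-- `K` is a covering for the incidence relation `covers`, where `covers i j` says that column `j`
covers row `i`. -/
def IsCovering (covers : I → J → Prop) (K : Finset J) : Prop :=
  ∀ i, ∃ j ∈ K, covers i j

theorem IsCovering.sum_le_sum_of_dual_feasible [Fintype I] {covers : I → J → Prop}
    [DecidableRel covers] {K : Finset J} (hK : IsCovering covers K) {lam : I → R}
    (hlam : ∀ i, 0 ≤ lam i) {w : J → R} (hw : ∀ j ∈ K, ∑ i with covers i j, lam i ≤ w j) :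
    ∑ i, lam i ≤ ∑ j ∈ K, w j :=
  calc
    ∑ i, lam i ≤ ∑ i, ∑ j ∈ K with covers i j, lam i := by
      refine sum_le_sum fun i _ ↦ ?_
      obtain ⟨j, hjK, hij⟩ := hK i
      exact single_le_sum (f := fun _ ↦ lam i) (fun _ _ ↦ hlam i) (mem_filter.2 ⟨hjK, hij⟩)
    _ = ∑ j ∈ K, ∑ i with covers i j, lam i := sum_comm' (by simp [and_comm])
    _ ≤ ∑ j ∈ K, w j := sum_le_sum hw

end WeakDuality

theorem sum_sub_sum_le_sum_piecewise_sub_sum_piecewise {J R : Type*} [DecidableEq J]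
    [AddCommGroup R] [PartialOrder R] [IsOrderedAddMonoid R] {l u c : J → R}
    (hc : c ∈ Set.Icc l u) (K K' : Finset J) :
    ∑ j ∈ K, c j - ∑ j ∈ K', c j ≤
      ∑ j ∈ K, K.piecewise u l j - ∑ j ∈ K', K.piecewise u l j := by
  have le_on_sdiff : ∀ j ∈ K \ K', c j ≤ K.piecewise u l j := fun j hj ↦ by
    rw [piecewise_eq_of_mem _ _ _ (mem_sdiff.1 hj).1]
    exact hc.2 j
  have ge_on_sdiff : ∀ j ∈ K' \ K, K.piecewise u l j ≤ c j := fun j hj ↦ by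
    rw [piecewise_eq_of_notMem _ _ _ (mem_sdiff.1 hj).2]
    exact hc.1 j
  rw [← sum_sdiff_sub_sum_sdiff (f := c), ← sum_sdiff_sub_sum_sdiff (f := K.piecewise u l)]
  exact sub_le_sub (sum_le_sum le_on_sdiff) (sum_le_sum ge_on_sdiff)

section Regret

variable {J : Type*} {Λ : Set (Finset J)} {K : Finset J} {l u c : J → ℝ} {a : ℝ}

/-- The least cost of a feasible set in the scenario `c`, for an arbitrary family `Λ` of feasible
sets. It is meaningful when `Λ` is nonempty and the costs of its members are bounded below. -/
noncomputable def optimalCost (Λ : Set (Finset J)) (c : J → ℝ) : ℝ :=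
  sInf {v | ∃ K ∈ Λ, v = ∑ j ∈ K, c j}

/-- The regret of `K` in the scenario `c`: its excess cost over an optimal member of `Λ`. -/
noncomputable def regret (Λ : Set (Finset J)) (c : J → ℝ) (K : Finset J) : ℝ :=
  ∑ j ∈ K, c j - optimalCost Λ c

/-- The robustness cost `R_K`: the largest regret of `K` over all scenarios between `l` and `u`. -/
noncomputable def robustnessCost (Λ : Set (Finset J)) (l u : J → ℝ) (K : Finset J) : ℝ :=
  sSup {t | ∃ c ∈ Set.Icc l u, t = regret Λ c K}

/-- The optimal value `min_{K ∈ Λ} R_K` of the min-max regret problem, encoded as an infimum. -/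
noncomputable def optimalRobustnessCost (Λ : Set (Finset J)) (l u : J → ℝ) : ℝ :=
  sInf {r | ∃ K ∈ Λ, r = robustnessCost Λ l u K}

theorem le_optimalCost (hΛ : Λ.Nonempty) (ha : ∀ K ∈ Λ, a ≤ ∑ j ∈ K, c j) :
    a ≤ optimalCost Λ c := by
  obtain ⟨K, hK⟩ := hΛ
  refine le_csInf ⟨_, K, hK, rfl⟩ ?_
  rintro _ ⟨K', hK', rfl⟩
  exact ha K' hK'

theorem optimalCost_le_sum (ha : ∀ K ∈ Λ, a ≤ ∑ j ∈ K, l j) (hlc : l ≤ c)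
    (hK : K ∈ Λ) : optimalCost Λ c ≤ ∑ j ∈ K, c j := by
  refine csInf_le ⟨a, ?_⟩ ⟨K, hK, rfl⟩
  rintro _ ⟨K', hK', rfl⟩
  exact (ha K' hK').trans (sum_le_sum fun j _ ↦ hlc j)

theorem regret_le_regret_piecewise [DecidableEq J] (hΛ : Λ.Nonempty)
    (ha : ∀ K ∈ Λ, a ≤ ∑ j ∈ K, l j) (hc : c ∈ Set.Icc l u) (K : Finset J) :
    regret Λ c K ≤ regret Λ (K.piecewise u l) K := by
  have le_opt : ∑ j ∈ K, c j - regret Λ (K.piecewise u l) K ≤ optimalCost Λ c := by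
    refine le_optimalCost hΛ fun K' hK' ↦ ?_
    have opt_le := optimalCost_le_sum ha (K.piecewise_mem_Icc' (hc.1.trans hc.2)).1 hK'
    have exchange := sum_sub_sum_le_sum_piecewise_sub_sum_piecewise hc K K'
    rw [regret]
    linarith
  exact sub_le_comm.1 le_opt

theorem robustnessCost_eq_regret_piecewise [DecidableEq J] (hΛ : Λ.Nonempty) (hlu : l ≤ u)
    (ha : ∀ K ∈ Λ, a ≤ ∑ j ∈ K, l j) (K : Finset J) :
    robustnessCost Λ l u K = regret Λ (K.piecewise u l) K := by
  refine IsGreatest.csSup_eq ⟨⟨_, K.piecewise_mem_Icc' hlu, rfl⟩, ?_⟩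
  rintro _ ⟨c, hc, rfl⟩
  exact regret_le_regret_piecewise hΛ ha hc K

theorem robustnessCost_nonneg (hlu : l ≤ u) (ha : ∀ K ∈ Λ, a ≤ ∑ j ∈ K, l j)
    (hK : K ∈ Λ) : 0 ≤ robustnessCost Λ l u K := by
  classical
  rw [robustnessCost_eq_regret_piecewise ⟨K, hK⟩ hlu ha]
  exact sub_nonneg.2 <| optimalCost_le_sum ha (K.piecewise_mem_Icc' hlu).1 hK

theorem optimalRobustnessCost_le_robustnessCost (hlu : l ≤ u)
    (ha : ∀ K ∈ Λ, a ≤ ∑ j ∈ K, l j) (hK : K ∈ Λ) :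
    optimalRobustnessCost Λ l u ≤ robustnessCost Λ l u K := by
  refine csInf_le ⟨0, ?_⟩ ⟨K, hK, rfl⟩
  rintro _ ⟨K', hK', rfl⟩
  exact robustnessCost_nonneg hlu ha hK'

theorem optimalRobustnessCost_le_sum_sub [DecidableEq J] (hlu : l ≤ u) (hK : K ∈ Λ)
    (ha : ∀ K' ∈ Λ, a ≤ ∑ j ∈ K', K.piecewise u l j) :
    optimalRobustnessCost Λ l u ≤ ∑ j ∈ K, u j - a := by
  have lower : ∀ K' ∈ Λ,
      a + ∑ j ∈ K, l j - ∑ j ∈ K, K.piecewise u l j ≤ ∑ j ∈ K', l j := fun K' hK' ↦ by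
    have exchange := sum_sub_sum_le_sum_piecewise_sub_sum_piecewise
      (Set.left_mem_Icc.2 hlu) K K'
    linarith [ha K' hK']
  calc
    optimalRobustnessCost Λ l u ≤ robustnessCost Λ l u K :=
      optimalRobustnessCost_le_robustnessCost hlu lower hK
    _ = ∑ j ∈ K, K.piecewise u l j - optimalCost Λ (K.piecewise u l) :=
      robustnessCost_eq_regret_piecewise ⟨K, hK⟩ hlu lower K
    _ = ∑ j ∈ K, u j - optimalCost Λ (K.piecewise u l) := by simp [sum_piecewise]
    _ ≤ ∑ j ∈ K, u j - a := sub_le_sub_left (le_optimalCost ⟨K, hK⟩ ha) _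

end Regret

theorem rsc_lp_heuristic_upper_bound_general {I J : Type*} [Fintype I] [DecidableEq J]
    {covers : I → J → Prop} [DecidableRel covers] {l u : J → ℝ} (hlu : l ≤ u)
    {Y : Finset J} (hY : IsCovering covers Y) {lam : I → ℝ} (hlam : ∀ i, 0 ≤ lam i)
    (hdual : ∀ j, ∑ i with covers i j, lam i ≤ l j + (u j - l j) * (if j ∈ Y then 1 else 0)) :
    optimalRobustnessCost {K | IsCovering covers K} l u ≤ ∑ j ∈ Y, u j - ∑ i, lam i := by
  have hdual' : ∀ j, ∑ i with covers i j, lam i ≤ Y.piecewise u l j := fun j ↦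
    (hdual j).trans_eq (by by_cases hj : j ∈ Y <;> simp [hj])
  exact optimalRobustnessCost_le_sum_sub hlu hY fun _ hK ↦
    hK.sum_le_sum_of_dual_feasible hlam fun j _ ↦ hdual' j

/-- validity of the LP-based heuristic bound for the robust set covering problem:
if `Y ∈ Λ` is a covering and `λ : I → ℝ` is nonnegative with
`∑_{i : O i j = 1} λ i ≤ l j + (u j - l j) * [j ∈ Y]` for every column `j`, then the optimal
robustness cost `min_{K ∈ Λ} R_K` is at most `∑_{j ∈ Y} u j - ∑ i, λ i`. -/
theorem rsc_lp_heuristic_upper_bound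
    {I J : Type*} [Fintype I] [Fintype J] [DecidableEq J]
    (O : I → J → ℕ) (hO : ∀ i j, O i j = 0 ∨ O i j = 1)
    (l u : J → ℕ) (hlu : ∀ j, l j ≤ u j)
    (Λ : Set (Finset J))
    (hΛ : Λ = {K : Finset J | ∀ i, ∃ j ∈ K, O i j = 1})
    (hΛne : Λ.Nonempty)
    (Y : Finset J) (hY : Y ∈ Λ)
    (lam : I → ℝ) (hlam : ∀ i, 0 ≤ lam i)
    (hdual : ∀ j, (∑ i ∈ Finset.univ.filter (fun i => O i j = 1), lam i) ≤
      (l j : ℝ) + ((u j : ℝ) - (l j : ℝ)) * (if j ∈ Y then 1 else 0)) :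
    sInf {r : ℝ | ∃ K ∈ Λ,
        r = sSup {t : ℝ | ∃ c : J → ℝ, (∀ j, (l j : ℝ) ≤ c j ∧ c j ≤ u j) ∧
          t = (∑ j ∈ K, c j) - sInf {v : ℝ | ∃ K' ∈ Λ, v = ∑ j ∈ K', c j}}} ≤
      (∑ j ∈ Y, (u j : ℝ)) - ∑ i, lam i := by
  subst hΛ
  simpa only [optimalRobustnessCost, robustnessCost, regret, optimalCost, IsCovering, Set.mem_Icc,
    Pi.le_def, ← forall_and] using
    rsc_lp_heuristic_upper_bound_general (fun j ↦ Nat.cast_le.2 (hlu j)) hY hlam hdual
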